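/- Suppose k ≥ 1, n ≥ k, n + k is even, n + 2 ≥ k², and ℓ ≥ 0 is an integer such that n + 1 + 2ℓ < ((k+1)²/k²)·(n+2). Then Pₙ(k−2) < P_{n+1+2ℓ}(k−1), where Pₙ(−1) is interpreted as 0 (so for k = 1 the claim reads 0 < P_{n+1+2ℓ}(0)). -/

import Mathlib

/-!
Write `p m j = P(Sₘ = j)`. One step of the walk from time `n` gives
`P_{n+1}(k-1) = Pₙ(k-2) + p n k`, and two steps from time `m ≡ k - 1 (mod 2)` give
`P_{m+2}(k-1) = Pₘ(k-1) - (p m (k-1) - p m (k+1)) / 2`, where the loss equals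
`k / (m+1) * p (m+1) k` by the binomial absorption identities. So the claim is equivalent to
`∑_{i<ℓ} k / (n+2+2i) * p (n+2+2i) k < p n k` (`P_eq_add_sub_sum`).

The ratio `p (m+2) k / p m k = (m+2)(m+1) / ((m+2)² - k²)` is at most `1` once `m + 2 ≥ k²`
(`prEq_add_two_le`), so it is enough that `∑_{i<ℓ} k / (n+2+2i) < 1`. Comparing with the
logarithm, `∑_{i<ℓ} 2 / (n+2+2i) ≤ log ((n+1+2ℓ)/(n+1))` (`sum_le_log`), and it remains to see that
`(n+1+2ℓ)/(n+1) < exp (2/k)`. The real-variable bound on `n + 1 + 2ℓ` is not quite sufficient for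
`n` near `k²`; integrality closes the gap (`ratio_bound`): if `n + 2 = k²` then `ℓ ≤ k`; if
`n + 2 ≥ k² + 2` and `ℓ ≤ k + 1` the first three terms of `exp (2/k)` suffice; and `ℓ ≥ k + 2`
forces `n + 2 ≥ k² + k`, where five terms suffice.
-/


/-- Probability of an event under the uniform distribution on sign vectors
`{-1,1}^n` (encoded as `Fin n → Bool`), which is the joint law of `n`
independent Rademacher random variables. -/
noncomputable def pr (n : ℕ) (E : (Fin n → Bool) → Prop) : ℝ :=
  letI := Classical.decPred E
  ((Finset.univ.filter E).card : ℝ) / 2 ^ n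

/-- `S n ε = ε₁ + ⋯ + εₙ`, the sum of `n` Rademacher variables. -/
def S (n : ℕ) (ε : Fin n → Bool) : ℤ := ∑ i, if ε i then 1 else -1

/-- `P n k = P(|Sₙ| ≤ k)` (with an integer threshold, so `P n (-1) = 0`). -/
noncomputable def P (n : ℕ) (k : ℤ) : ℝ := pr n fun ε => |S n ε| ≤ k

/-- `prEq n j = P(Sₙ = j)`. -/
noncomputable def prEq (n : ℕ) (j : ℤ) : ℝ := pr n fun ε => S n ε = j

/-- `Pxi ξ n = P(|Sₙ| ≤ ξ·√n)`. -/
noncomputable def Pxi (ξ : ℝ) (n : ℕ) : ℝ :=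
  pr n fun ε => (|S n ε| : ℝ) ≤ ξ * Real.sqrt n

/-- `nseq ξ k = nₖ = 2·⌈(k²/ξ² + k)/2⌉ − k − 1`. -/
noncomputable def nseq (ξ : ℝ) (k : ℕ) : ℤ :=
  2 * ⌈((k : ℝ) ^ 2 / ξ ^ 2 + (k : ℝ)) / 2⌉ - k - 1

/-! ### The law of the walk -/

/-- The expectation `E f(Sₙ)`. -/
noncomputable def Ex (n : ℕ) (f : ℤ → ℝ) : ℝ := (∑ ε : Fin n → Bool, f (S n ε)) / 2 ^ n

lemma pr_eq_Ex (n : ℕ) (A : ℤ → Prop) [DecidablePred A] :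
    pr n (fun ε => A (S n ε)) = Ex n (fun x => if A x then 1 else 0) := by
  unfold pr Ex
  rw [Finset.sum_boole]
  congr!

lemma P_eq_Ex (n : ℕ) (k : ℤ) : P n k = Ex n (fun x => if |x| ≤ k then 1 else 0) :=
  pr_eq_Ex n (fun x => |x| ≤ k)

lemma prEq_eq_Ex (n : ℕ) (j : ℤ) : prEq n j = Ex n (fun x => if x = j then 1 else 0) :=
  pr_eq_Ex n (fun x => x = j)

lemma S_cons (n : ℕ) (b : Bool) (ε : Fin n → Bool) :
    S (n + 1) (Fin.cons b ε : Fin (n + 1) → Bool) = (if b then 1 else -1) + S n ε := by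
  simp [S, Fin.sum_univ_succ]

lemma Ex_succ (n : ℕ) (f : ℤ → ℝ) :
    Ex (n + 1) f = Ex n (fun x => (f (1 + x) + f (-1 + x)) / 2) := by
  unfold Ex
  rw [← (Fin.consEquiv (fun _ => Bool)).sum_comp, Fintype.sum_prod_type, Fintype.sum_bool]
  simp only [Fin.consEquiv, Equiv.coe_fn_mk, S_cons, if_true]
  rw [← Finset.sum_add_distrib, ← Finset.sum_div, pow_succ]
  simp only [Bool.false_eq_true, if_false]
  field_simp

lemma S_parity (n : ℕ) (ε : Fin n → Bool) : Even (S n ε + n) := by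
  have : S n ε + n = ∑ i : Fin n, ((if ε i then 1 else -1) + 1 : ℤ) := by
    simp [S, Finset.sum_add_distrib]
  rw [this]
  refine Finset.even_sum _ fun i _ => ?_
  by_cases h : ε i <;> simp [h]

lemma Ex_congr (n : ℕ) (f g : ℤ → ℝ) (h : ∀ x : ℤ, Even (x + n) → f x = g x) :
    Ex n f = Ex n g := by
  unfold Ex
  congr 1
  exact Finset.sum_congr rfl fun ε _ => h _ (S_parity n ε)

lemma Ex_add (n : ℕ) (f g : ℤ → ℝ) : Ex n (fun x => f x + g x) = Ex n f + Ex n g := by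
  simp [Ex, Finset.sum_add_distrib, add_div]

lemma Ex_smul (n : ℕ) (c : ℝ) (f : ℤ → ℝ) : Ex n (fun x => c * f x) = c * Ex n f := by
  simp [Ex, ← Finset.mul_sum, mul_div_assoc]

lemma prEq_succ (n : ℕ) (j : ℤ) : prEq (n + 1) j = (prEq n (j - 1) + prEq n (j + 1)) / 2 := by
  have : (prEq n (j - 1) + prEq n (j + 1)) / 2
      = 1 / 2 * prEq n (j - 1) + 1 / 2 * prEq n (j + 1) := by ring
  rw [this]
  simp only [prEq_eq_Ex]
  rw [Ex_succ, ← Ex_smul, ← Ex_smul, ← Ex_add]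
  congr 1
  funext x
  have h1 : (1 + x = j) = (x = j - 1) := by apply propext; omega
  have h2 : (-1 + x = j) = (x = j + 1) := by apply propext; omega
  simp only [h1, h2]
  ring

lemma prEq_zero (j : ℤ) : prEq 0 j = if j = 0 then 1 else 0 := by
  simp [prEq_eq_Ex, Ex, S, eq_comm (a := j)]

lemma prEq_neg (n : ℕ) (j : ℤ) : prEq n (-j) = prEq n j := by
  induction n generalizing j with
  | zero => simp [prEq_zero]
  | succ n ih =>
    rw [prEq_succ, prEq_succ, ← ih (j - 1), ← ih (j + 1)]
    have h1 : -j - 1 = -(j + 1) := by ring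
    have h2 : -j + 1 = -(j - 1) := by ring
    rw [h1, h2]
    ring

lemma prEq_eq_zero (n : ℕ) (j : ℤ) (hj : j < -n) : prEq n j = 0 := by
  induction n generalizing j with
  | zero =>
    have : j ≠ 0 := by push_cast at hj; omega
    simp [prEq_zero, this]
  | succ n ih =>
    push_cast at hj
    rw [prEq_succ, ih _ (by omega), ih _ (by omega)]
    simp

lemma prEq_choose (n b : ℕ) : prEq n (2 * b - n) = (n.choose b : ℝ) / 2 ^ n := by
  induction n generalizing b with
  | zero =>
    rcases b with _ | b
    · simp [prEq_zero]
    · have : (2 * ((b + 1 : ℕ) : ℤ) - (0 : ℕ)) ≠ 0 := by push_cast; omega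
      simp [prEq_zero]
      omega
  | succ n ih =>
    rw [prEq_succ]
    have h2 : (2 * (b : ℤ) - ((n + 1 : ℕ) : ℤ) + 1) = 2 * b - n := by push_cast; ring
    rw [h2, ih b]
    rcases b with _ | b
    · rw [prEq_eq_zero _ _ (by push_cast; omega)]
      simp [pow_succ]
      ring
    · have h1 : (2 * ((b + 1 : ℕ) : ℤ) - ((n + 1 : ℕ) : ℤ) - 1) = 2 * b - n := by push_cast; ring
      rw [h1, ih b, Nat.choose_succ_succ, pow_succ]
      push_cast
      field_simp

/-! ### One-step and two-step recursions for `P` -/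

lemma P_succ (n k : ℕ) (hk : 1 ≤ k) (h : Even (n + k)) :
    P (n + 1) ((k : ℤ) - 1) = P n ((k : ℤ) - 2) + prEq n k := by
  have e : prEq n (k : ℤ) = 1 / 2 * prEq n k + 1 / 2 * prEq n (-k) := by
    rw [prEq_neg]; ring
  rw [e]
  simp only [prEq_eq_Ex, P_eq_Ex]
  rw [Ex_succ, ← Ex_smul, ← Ex_smul, ← Ex_add, ← Ex_add]
  apply Ex_congr
  intro x hx
  have hx' : (x - k) % 2 = 0 := by
    obtain ⟨a, ha⟩ := h
    obtain ⟨c, hc⟩ := hx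
    omega
  -- for `k ≥ 1` the points `k` and `-k` are distinct, so at most one indicator is active
  simp only [abs_le]
  split_ifs <;> first | (exfalso; omega) | norm_num

lemma P_add_two (m j : ℕ) (h : Even (m + j)) :
    P (m + 2) j = P m j - (prEq m j - prEq m (j + 2)) / 2 := by
  have e : P m j - (prEq m (j : ℤ) - prEq m (j + 2)) / 2 = P m j + ((-1 / 4) * prEq m j +
      ((-1 / 4) * prEq m (-j) + (1 / 4 * prEq m (j + 2) + 1 / 4 * prEq m (-(j + 2))))) := by
    rw [prEq_neg, prEq_neg]; ring
  rw [e]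
  simp only [prEq_eq_Ex, P_eq_Ex]
  rw [Ex_succ, Ex_succ, ← Ex_smul, ← Ex_smul, ← Ex_smul, ← Ex_smul, ← Ex_add, ← Ex_add,
    ← Ex_add, ← Ex_add]
  apply Ex_congr
  intro x hx
  have hx' : (x - j) % 2 = 0 := by
    obtain ⟨a, ha⟩ := h
    obtain ⟨c, hc⟩ := hx
    omega
  simp only [abs_le]
  -- for `j = 0` the points `j` and `-j` coincide and their indicators add up
  rcases Nat.eq_zero_or_pos j with rfl | hj
  · rcases (by omega : x < -2 ∨ x = -2 ∨ x = 0 ∨ x = 2 ∨ 2 < x) with h | h | h | h | h <;>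
    · simp (disch := omega) only [if_pos, if_neg]
      norm_num
  · rcases (by omega : x < -j - 2 ∨ x = -j - 2 ∨ x = -j ∨ (-j + 2 ≤ x ∧ x ≤ j - 2) ∨
      x = j ∨ x = j + 2 ∨ j + 2 < x) with h | h | h | h | h | h | h <;>
    · simp (disch := omega) only [if_pos, if_neg]
      norm_num

/-! ### Binomial identities -/

/-- The discrete hitting-time identity: the loss in two steps is `k/(m+1) * P(S_{m+1} = k)`. -/
lemma prEq_diff (m k : ℕ) (hk : 1 ≤ k) (h : Even (m + 1 + k)) :
    (prEq m ((k : ℤ) - 1) - prEq m ((k : ℤ) + 1)) / 2 = k / (m + 1) * prEq (m + 1) k := by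
  obtain ⟨c, hc⟩ := h
  obtain ⟨b, rfl⟩ : ∃ b, c = b + 1 := ⟨c - 1, by omega⟩
  have e1 : (k : ℤ) - 1 = 2 * (b : ℕ) - (m : ℕ) := by omega
  have e2 : (k : ℤ) + 1 = 2 * (b + 1 : ℕ) - (m : ℕ) := by omega
  have e3 : (k : ℤ) = 2 * (b + 1 : ℕ) - (m + 1 : ℕ) := by omega
  have ek : (k : ℝ) = 2 * b + 1 - m := by
    have : (k : ℤ) = 2 * b + 1 - m := by omega
    exact_mod_cast this
  rw [e1, e2, e3, prEq_choose, prEq_choose, prEq_choose, ek]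
  have a1 : ((m : ℝ) + 1) * m.choose b = (m + 1).choose (b + 1) * (b + 1) := by
    exact_mod_cast Nat.add_one_mul_choose_eq m b
  have a2 : ((m + 1).choose (b + 1) : ℝ) = m.choose b + m.choose (b + 1) := by
    exact_mod_cast Nat.choose_succ_succ m b
  rw [pow_succ]
  field_simp
  have a3 := a2
  generalize ((m + 1).choose (b + 1) : ℝ) = u at *
  generalize (m.choose b : ℝ) = v at *
  generalize (m.choose (b + 1) : ℝ) = w at *
  have : w = u - v := by linarith
  subst this
  linear_combination 2 * a1

lemma prEq_add_two_le (m k : ℕ) (hkm : k ≤ m) (h : Even (m + k)) (h2 : k ^ 2 ≤ m + 2) :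
    prEq (m + 2) k ≤ prEq m k := by
  obtain ⟨b, hb⟩ := h
  have e1 : (k : ℤ) = 2 * (b : ℕ) - (m : ℕ) := by omega
  have e2 : (k : ℤ) = 2 * (b + 1 : ℕ) - (m + 2 : ℕ) := by omega
  have ek : (k : ℝ) = 2 * b - m := by exact_mod_cast e1
  have hbm : b ≤ m := by omega
  have hbm' : (b : ℝ) ≤ m := by exact_mod_cast hbm
  have E1 := prEq_choose m b
  have E2 := prEq_choose (m + 2) (b + 1)
  rw [← e1] at E1
  rw [← e2] at E2
  rw [E1, E2]
  have a1 : ((m : ℝ) + 1 + 1) * (m + 1).choose b = (m + 2).choose (b + 1) * (b + 1) := by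
    exact_mod_cast Nat.add_one_mul_choose_eq (m + 1) b
  have a2 : (m.choose b : ℝ) * (m + 1) = (m + 1).choose b * (m + 1 - b) := by
    have := Nat.choose_mul_succ_eq m b
    have hh : ((m + 1 - b : ℕ) : ℝ) = m + 1 - b := by
      rw [Nat.cast_sub (by omega)]; push_cast; ring
    rw [← hh]
    exact_mod_cast this
  have h2' : (k : ℝ) ^ 2 ≤ m + 2 := by exact_mod_cast h2
  rw [ek] at h2'
  have hv : (0 : ℝ) ≤ m.choose b := by positivity
  rw [pow_add, div_le_div_iff₀ (by positivity) (by positivity)]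
  generalize ((m + 2).choose (b + 1) : ℝ) = u at *
  generalize (m.choose b : ℝ) = v at *
  generalize ((m + 1).choose b : ℝ) = w at *
  have key : u * ((b + 1) * (m + 1 - b)) = v * ((m + 1) * (m + 2)) := by
    linear_combination (-((m : ℝ) + 1 - b)) * a1 - ((m : ℝ) + 2) * a2
  have hpos : (0 : ℝ) < (b + 1) * (m + 1 - b) := by
    have : (0 : ℝ) < m + 1 - b := by linarith
    positivity
  have hle : u ≤ 4 * v := by
    refine le_of_mul_le_mul_right ?_ hpos
    rw [key]
    have : ((m : ℝ) + 1) * (m + 2) ≤ 4 * ((b + 1) * (m + 1 - b)) := by nlinarith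
    nlinarith [mul_le_mul_of_nonneg_left this hv]
  have : (0 : ℝ) < 2 ^ m := by positivity
  nlinarith

lemma prEq_pos (n k : ℕ) (hnk : k ≤ n) (h : Even (n + k)) : 0 < prEq n k := by
  obtain ⟨b, hb⟩ := h
  have e1 : (k : ℤ) = 2 * (b : ℕ) - (n : ℕ) := by omega
  rw [e1, prEq_choose]
  have : 0 < n.choose b := Nat.choose_pos (by omega)
  positivity

/-! ### Reduction to a harmonic sum -/

lemma P_eq_add_sub_sum (n k ℓ : ℕ) (hk : 1 ≤ k) (h : Even (n + k)) :
    P (n + 1 + 2 * ℓ) ((k : ℤ) - 1) = P n ((k : ℤ) - 2) + prEq n k -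
      ∑ i ∈ Finset.range ℓ, k / ((n : ℝ) + 2 + 2 * i) * prEq (n + 2 + 2 * i) k := by
  induction ℓ with
  | zero => simpa using P_succ n k hk h
  | succ ℓ ih =>
    have hev : Even (n + 1 + 2 * ℓ + 1 + k) := by
      obtain ⟨a, ha⟩ := h
      exact ⟨a + ℓ + 1, by omega⟩
    have hev' : Even (n + 1 + 2 * ℓ + (k - 1)) := by
      obtain ⟨a, ha⟩ := h
      exact ⟨a + ℓ, by omega⟩
    have s1 := P_add_two (n + 1 + 2 * ℓ) (k - 1) hev'
    have s2 := prEq_diff (n + 1 + 2 * ℓ) k hk hev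
    have c1 : ((k - 1 : ℕ) : ℤ) = (k : ℤ) - 1 := by omega
    have c2 : (k : ℤ) - 1 + 2 = k + 1 := by ring
    rw [c1, c2, s2, ih] at s1
    have c3 : n + 1 + 2 * (ℓ + 1) = n + 1 + 2 * ℓ + 2 := by ring
    have c4 : n + 1 + 2 * ℓ + 1 = n + 2 + 2 * ℓ := by ring
    rw [c3, s1, Finset.sum_range_succ, c4]
    push_cast
    have c5 : (n : ℝ) + 1 + 2 * ℓ + 1 = n + 2 + 2 * ℓ := by ring
    rw [c5]
    ring

lemma prEq_add_le (n k i : ℕ) (hkn : k ≤ n) (h : Even (n + k)) (h2 : k ^ 2 ≤ n + 2) :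
    prEq (n + 2 * i) k ≤ prEq n k := by
  induction i with
  | zero => simp
  | succ i ih =>
    refine le_trans ?_ ih
    refine prEq_add_two_le (n + 2 * i) k (by omega) ?_ (by omega)
    obtain ⟨a, ha⟩ := h
    exact ⟨a + i, by omega⟩

/-- The midpoint-rule comparison of the harmonic sum with `∫ dx / x`. -/
lemma sum_le_log (n ℓ : ℕ) :
    ∑ i ∈ Finset.range ℓ, 2 / ((n : ℝ) + 2 + 2 * i) ≤
      Real.log (((n : ℝ) + 1 + 2 * ℓ) / (n + 1)) := by
  induction ℓ with
  | zero =>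
    have : ((n : ℝ) + 1) ≠ 0 := by positivity
    simp [this]
  | succ ℓ ih =>
    rw [Finset.sum_range_succ]
    have hp : (0 : ℝ) < (n : ℝ) + 1 + 2 * ℓ := by positivity
    have key := Real.le_log_one_add_of_nonneg
      (show (0 : ℝ) ≤ 2 / ((n : ℝ) + 1 + 2 * ℓ) by positivity)
    have e1 : 2 * (2 / ((n : ℝ) + 1 + 2 * ℓ)) / (2 / ((n : ℝ) + 1 + 2 * ℓ) + 2)
        = 2 / ((n : ℝ) + 2 + 2 * ℓ) := by
      field_simp
      ring
    have e2 : ((n : ℝ) + 1 + 2 * ((ℓ + 1 : ℕ) : ℝ)) / (n + 1) =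
        (((n : ℝ) + 1 + 2 * ℓ) / (n + 1)) * (1 + 2 / ((n : ℝ) + 1 + 2 * ℓ)) := by
      push_cast
      field_simp
      ring
    rw [e1] at key
    rw [e2, Real.log_mul (by positivity) (by positivity)]
    linarith

/-- With `y = 2/k`, the right-hand factor is the degree-four Taylor polynomial of `exp y`,
multiplied by `3 * k ^ 4`. -/
lemma ratio_bound (n k ℓ : ℕ) (hk : 1 ≤ k) (hnk : k ≤ n) (h : Even (n + k))
    (h2 : k ^ 2 ≤ n + 2) (hℓ : k ^ 2 * (n + 1 + 2 * ℓ) < (k + 1) ^ 2 * (n + 2)) :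
    3 * k ^ 4 * (n + 1 + 2 * ℓ) ≤
      (n + 1) * (3 * k ^ 4 + 6 * k ^ 3 + 6 * k ^ 2 + 4 * k + 2) := by
  have hkk : Even (k ^ 2 + k) := by
    have := Nat.even_mul_succ_self k
    rwa [show k ^ 2 + k = k * (k + 1) by ring]
  rcases Nat.lt_or_ge ℓ (k + 2) with hl | hl
  · rcases Nat.lt_or_ge n (k ^ 2) with hn | hn
    · -- by parity `n + 2 = k ^ 2`, and then `ℓ ≤ k`
      have hn2 : n + 2 = k ^ 2 := by
        obtain ⟨a, ha⟩ := h
        obtain ⟨c, hc⟩ := hkk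
        omega
      have hk2 : 2 ≤ k := by
        by_contra hlt
        have : k = 1 := by omega
        subst this
        omega
      have hlk : ℓ ≤ k := by
        rw [hn2, mul_comm] at hℓ
        have := lt_of_mul_lt_mul_right hℓ (by positivity)
        nlinarith
      have hn1 : (n : ℤ) = k ^ 2 - 2 := by
        have : ((n + 2 : ℕ) : ℤ) = ((k ^ 2 : ℕ) : ℤ) := by rw [hn2]
        push_cast at this
        linarith
      have hlk' : (ℓ : ℤ) ≤ k := by exact_mod_cast hlk
      have hk' : (2 : ℤ) ≤ k := by exact_mod_cast hk2
      zify
      rw [hn1]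
      obtain ⟨t, ht⟩ : ∃ t : ℤ, (k : ℤ) = t + 2 := ⟨k - 2, by ring⟩
      have ht0 : 0 ≤ t := by linarith
      calc (3 : ℤ) * k ^ 4 * (k ^ 2 - 2 + 1 + 2 * ℓ)
          ≤ 3 * k ^ 4 * (k ^ 2 - 2 + 1 + 2 * k) := by gcongr
        _ ≤ _ := by
          rw [ht, ← sub_nonneg]
          ring_nf
          positivity
    · -- here `2 * ℓ ≤ 2 * k + 2`, so the Taylor terms up to degree two suffice
      have h1 : 3 * k ^ 4 * (2 * ℓ) ≤ 3 * k ^ 4 * (2 * (k + 1)) := by gcongr; omega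
      have h3 : k ^ 2 * (6 * k ^ 3 + 6 * k ^ 2) ≤ n * (6 * k ^ 3 + 6 * k ^ 2) := by gcongr
      nlinarith [Nat.zero_le (n * k), Nat.zero_le (k ^ 3), Nat.zero_le (k ^ 2)]
  · -- `ℓ ≥ k + 2` forces `n + 2 ≥ k ^ 2 + k`
    have hn : k ^ 2 + k ≤ n + 2 := by
      by_contra hlt
      have hlt' : n + 2 + 1 ≤ k ^ 2 + k := by omega
      have h3 : k ^ 2 * (2 * (k + 2)) ≤ k ^ 2 * (2 * ℓ) := by gcongr
      have h4 : (2 * k + 1) * (n + 2 + 1) ≤ (2 * k + 1) * (k ^ 2 + k) := by gcongr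
      nlinarith
    have h5 : 3 * k ^ 2 * (k ^ 2 * (n + 1 + 2 * ℓ)) ≤ 3 * k ^ 2 * ((k + 1) ^ 2 * (n + 2)) := by
      gcongr
    rcases Nat.lt_or_ge k 2 with hk1 | hk2
    · have : k = 1 := by omega
      subst this
      omega
    · have hn' : (k : ℤ) ^ 2 + k ≤ n + 2 := by exact_mod_cast hn
      have hk' : (2 : ℤ) ≤ k := by exact_mod_cast hk2
      zify at h5 ⊢
      obtain ⟨t, ht⟩ : ∃ t : ℤ, (k : ℤ) = t + 2 := ⟨k - 2, by ring⟩
      have ht0 : 0 ≤ t := by linarith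
      obtain ⟨s, hs⟩ : ∃ s : ℤ, (n : ℤ) = k ^ 2 + k - 2 + s := ⟨n - (k ^ 2 + k - 2), by ring⟩
      have hs0 : 0 ≤ s := by linarith
      have h6 : 3 * (k : ℤ) ^ 2 * ((k + 1) ^ 2 * (n + 2)) ≤
          (n + 1) * (3 * k ^ 4 + 6 * k ^ 3 + 6 * k ^ 2 + 4 * k + 2) := by
        rw [hs, ht, ← sub_nonneg]
        ring_nf
        positivity
      linarith

lemma taylor_lt_exp (y : ℝ) (hy : 0 < y) :
    1 + y + y ^ 2 / 2 + y ^ 3 / 6 + y ^ 4 / 24 < Real.exp y := by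
  have := Real.sum_le_exp_of_nonneg hy.le 6
  simp [Finset.sum_range_succ, Nat.factorial] at this
  have : 0 < y ^ 5 / 120 := by positivity
  linarith

/-- if `k ≥ 1`, `n ≥ k`, `n + k` even, `n + 2 ≥ k²`, and `ℓ ≥ 0` with
`n + 1 + 2ℓ < ((k+1)²/k²)(n+2)`, then `Pₙ(k−2) < P_{n+1+2ℓ}(k−1)`
(with `Pₙ(−1) = 0`, which is automatic for the integer-threshold `P`). -/
theorem stmt_13 (n k ℓ : ℕ) (hk : 1 ≤ k) (hnk : k ≤ n) (h : Even (n + k))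
    (h2 : k ^ 2 ≤ n + 2)
    (hℓ : ((n : ℝ) + 1 + 2 * (ℓ : ℝ)) < (((k : ℝ) + 1) ^ 2 / (k : ℝ) ^ 2) * ((n : ℝ) + 2)) :
    P n ((k : ℤ) - 2) < P (n + 1 + 2 * ℓ) ((k : ℤ) - 1) := by
  have hk0 : (0 : ℝ) < k := by exact_mod_cast hk
  have hℓ' : k ^ 2 * (n + 1 + 2 * ℓ) < (k + 1) ^ 2 * (n + 2) := by
    rw [div_mul_eq_mul_div, lt_div_iff₀ (by positivity)] at hℓ
    have : (k : ℝ) ^ 2 * (n + 1 + 2 * ℓ) < (k + 1) ^ 2 * (n + 2) := by linarith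
    exact_mod_cast this
  have hr := ratio_bound n k ℓ hk hnk h h2 hℓ'
  have hlog : Real.log (((n : ℝ) + 1 + 2 * ℓ) / (n + 1)) < 2 / k := by
    rw [Real.log_lt_iff_lt_exp (by positivity)]
    refine lt_of_le_of_lt ?_ (taylor_lt_exp (2 / (k : ℝ)) (by positivity))
    have hr' : 3 * (k : ℝ) ^ 4 * (n + 1 + 2 * ℓ) ≤
      (n + 1) * (3 * k ^ 4 + 6 * k ^ 3 + 6 * k ^ 2 + 4 * k + 2) := by exact_mod_cast hr
    have e : 1 + 2 / (k : ℝ) + (2 / (k : ℝ)) ^ 2 / 2 + (2 / (k : ℝ)) ^ 3 / 6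
        + (2 / (k : ℝ)) ^ 4 / 24 =
        (3 * k ^ 4 + 6 * k ^ 3 + 6 * k ^ 2 + 4 * k + 2) / (3 * (k : ℝ) ^ 4) := by
      field_simp
      ring
    rw [e, div_le_div_iff₀ (by positivity) (by positivity)]
    linarith
  have hsum := (sum_le_log n ℓ).trans_lt hlog
  have hp := prEq_pos n k hnk h
  rw [P_eq_add_sub_sum n k ℓ hk h]
  have hle : ∑ i ∈ Finset.range ℓ, k / ((n : ℝ) + 2 + 2 * i) * prEq (n + 2 + 2 * i) k ≤
      (k / 2 * prEq n k) * ∑ i ∈ Finset.range ℓ, 2 / ((n : ℝ) + 2 + 2 * i) := by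
    rw [Finset.mul_sum]
    refine Finset.sum_le_sum fun i _ => ?_
    have := prEq_add_le n k (i + 1) hnk h h2
    rw [show n + 2 * (i + 1) = n + 2 + 2 * i by ring] at this
    calc k / ((n : ℝ) + 2 + 2 * i) * prEq (n + 2 + 2 * i) k
        ≤ k / ((n : ℝ) + 2 + 2 * i) * prEq n k := by gcongr
      _ = _ := by field_simp
  have hlt : (k / 2 * prEq n k) * ∑ i ∈ Finset.range ℓ, 2 / ((n : ℝ) + 2 + 2 * i) <
      (k / 2 * prEq n k) * (2 / k) := by gcongr
  have e : ((k : ℝ) / 2 * prEq n k) * (2 / k) = prEq n k := by field_simp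
  linarith
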